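/- Fix an r-graph F. For every ε > 0 there exist η > 0 and n₀ > 0 such that for every n-vertex r-graph G with n > n₀: if G contains at most η·n^(|V(F)|) copies of F, then one can delete at most ε·C(n, r) edges from G so that the resulting r-graph is F-free. -/

import Mathlib

open Finset

/-- An `r`-graph: a set of edges each of which has exactly `r` vertices. -/
def IsRGraph {α : Type*} (r : ℕ) (G : Finset (Finset α)) : Prop :=
  ∀ e ∈ G, e.card = r

/-- `G` contains a (not necessarily induced) copy of `H`, i.e. a subgraph isomorphic to `H`. -/
def ContainsCopy {α β : Type*} [DecidableEq β]
    (H : Finset (Finset α)) (G : Finset (Finset β)) : Prop :=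
  ∃ f : α → β, Function.Injective f ∧ ∀ e ∈ H, e.image f ∈ G

/-- There is a homomorphism from `H` to `G`. -/
def ContainsHom {α β : Type*} [DecidableEq β]
    (H : Finset (Finset α)) (G : Finset (Finset β)) : Prop :=
  ∃ f : α → β, ∀ e ∈ H, e.image f ∈ G

/-- The Turán number `ex(n, H)` for `r`-graphs: the maximum number of edges in an
`n`-vertex `H`-free `r`-graph. -/
noncomputable def exNum {α : Type*} (r n : ℕ) (H : Finset (Finset α)) : ℕ :=
  sSup {m | ∃ G : Finset (Finset (Fin n)), IsRGraph r G ∧ ¬ ContainsCopy H G ∧ G.card = m}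

/-- The two endpoints of an edge of a simple graph, as a `Finset`. -/
def sym2ToFinset {α : Type*} [Fintype α] [DecidableEq α] (e : Sym2 α) : Finset α :=
  Finset.univ.filter (· ∈ e)

/-- The expansion `H_F^(r)` of a 2-graph `F`: each edge of `F` is enlarged with a new set of
`r - 2` vertices, distinct edges getting disjoint sets of new vertices. -/
def expansion {α : Type*} [Fintype α] [DecidableEq α] (r : ℕ)
    (F : SimpleGraph α) [DecidableRel F.Adj] :
    Finset (Finset (α ⊕ (F.edgeFinset × Fin (r - 2)))) :=
  F.edgeFinset.attach.image (fun e =>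
    (sym2ToFinset e.1).image Sum.inl ∪
      (Finset.univ : Finset (Fin (r - 2))).image (fun i => Sum.inr (e, i)))

/-- The complete balanced `l`-partite `r`-graph `T_r(n, l)` on vertex set `Fin n`,
with vertex classes the residue classes modulo `l` (which differ in size by at most 1):
its edges are all `r`-sets meeting each class in at most one vertex. -/
def turanGraph (r n l : ℕ) : Finset (Finset (Fin n)) :=
  (Finset.univ.powersetCard r).filter
    (fun e => ∀ u ∈ e, ∀ v ∈ e, (u : ℕ) % l = (v : ℕ) % l → u = v)

/-- `t_r(n, l)`, the number of edges of `T_r(n, l)`. -/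
def turanNum (r n l : ℕ) : ℕ := (turanGraph r n l).card

/-- Two `r`-graphs on `Fin n` are `ε`-close if some relabelling of the first one has
symmetric difference at most `ε·C(n,r)` with the second one. -/
def EpsClose (r n : ℕ) (ε : ℝ) (G₁ G₂ : Finset (Finset (Fin n))) : Prop :=
  ∃ σ : Fin n ≃ Fin n,
    ((((G₁.image fun e => e.image σ) \ G₂) ∪ (G₂ \ (G₁.image fun e => e.image σ))).card : ℝ)
      ≤ ε * (n.choose r)

/-- `G` contains a member of the decomposition family `𝓕_F` (w.r.t. proper `ℓ`-colourings of
`F`) as a subgraph, with all its vertices placed inside `S`.  A member of `𝓕_F` is obtained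
from `F` by deleting the vertices of `ℓ - 2` colour classes of a proper `ℓ`-colouring of `F`. -/
def ContainsDecompMemberOn {α β : Type*} [DecidableEq β] (ℓ : ℕ) (F : SimpleGraph α)
    (G : Finset (Finset β)) (S : Set β) : Prop :=
  ∃ c : α → Fin ℓ, (∀ ⦃u v⦄, F.Adj u v → c u ≠ c v) ∧
    ∃ i j : Fin ℓ, i ≠ j ∧
      ∃ f : {v : α // c v = i ∨ c v = j} → β, Function.Injective f ∧
        (∀ v, f v ∈ S) ∧
        ∀ u v : {v : α // c v = i ∨ c v = j}, F.Adj u.1 v.1 → ({f u, f v} : Finset β) ∈ G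

/-- `biex(n, F) = ex(n, 𝓕_F)`: the maximum number of edges in an `n`-vertex 2-graph containing
no member of the decomposition family of `F` (w.r.t. proper `ℓ`-colourings) as a subgraph. -/
noncomputable def biex {α : Type*} (ℓ : ℕ) (F : SimpleGraph α) (n : ℕ) : ℕ :=
  sSup {m | ∃ G : Finset (Finset (Fin n)), IsRGraph 2 G ∧
    ¬ ContainsDecompMemberOn ℓ F G Set.univ ∧ G.card = m}

/-- The Lagrangian of an `r`-graph `G`:
`λ(G) = max { Σ_{e ∈ G} Π_{i ∈ e} w i }` over all legal weightings `w`. -/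
noncomputable def lagrangian {α : Type*} [Fintype α] (G : Finset (Finset α)) : ℝ :=
  sSup {x : ℝ | ∃ w : α → ℝ, (∀ i, 0 ≤ w i) ∧ (∑ i, w i) = 1 ∧
    x = ∑ e ∈ G, ∏ i ∈ e, w i}

/-!
A copy of `F` in `G` is an injective map `x : α → V` of a special kind, and whether `x` maps an
edge `e` onto an edge of `G` is a colour that depends only on the coordinates of `x` in `e`. So we
colour, for every set `I` of coordinates, the maps `x` by their restrictions to `I`, and regularise
these colourings one set `I` at a time, the largest sets last. Then each step concerns a single new
set: an energy increment makes its colour classes uniform with respect to the (refined) colourings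
of its proper subsets, so that the new colour has the expected conditional density, even when the
colours of the other sets not containing `I` are prescribed.

The regularisation attaches to each `I` a small exceptional set `B I`, depending only on the
coordinates in `I`, such that every `x` outside of all the sets `B I` shares the pattern of its
colours with a positive proportion of all maps. Delete the images `x(e)` of edges `e` of `F` with
`x ∈ B I` for some `I ⊆ e`. There are few of them, and a copy `x` of `F` that survives lies in no
`B I`, so a positive proportion of all maps have the same colours as `x`. These map the edges of
`F` onto edges of `G`, and almost all of them are injective; thus `G` contains many copies of `F`.
-/

namespace HypergraphRemoval

open scoped BigOperators

theorem abs_indicator_one_le {X : Type*} (A : Set X) (x : X) :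
    |A.indicator (1 : X → ℝ) x| ≤ 1 := by
  by_cases hx : x ∈ A <;> simp [hx]

section ConditionalMean

variable {X : Type*} [Fintype X] {s t : Setoid X} {f g : X → ℝ} {x y : X}

open Classical in
/-- The conditional expectation of `f` on the finite uniform probability space `X`, given the
partition of `X` into the classes of `s`. -/
noncomputable def condMean (s : Setoid X) (f : X → ℝ) (x : X) : ℝ :=
  𝔼 y with s y x, f y

/-- The proportion of the points of `X` that lie in the class of `x`. -/
noncomputable def density (s : Setoid X) (x : X) : ℝ :=
  𝔼 y, {y | s y x}.indicator 1 y

/-- The energy of the partition into the classes of `s` with respect to `f`: the mean square of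
the conditional expectation of `f`. -/
noncomputable def energy (s : Setoid X) (f : X → ℝ) : ℝ :=
  𝔼 x, condMean s f x ^ 2

theorem condMean_congr (hfg : ∀ y, s y x → f y = g y) : condMean s f x = condMean s g x := by
  classical
  exact expect_congr rfl fun y hy ↦ hfg y (mem_filter.1 hy).2

theorem condMean_eq_of_rel (h : s x y) (f : X → ℝ) : condMean s f x = condMean s f y := by
  classical
  refine expect_congr (filter_congr fun z _ ↦ ?_) fun _ _ ↦ rfl
  exact ⟨fun hz ↦ s.trans hz h, fun hz ↦ s.trans hz (s.symm h)⟩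

theorem le_ker_condMean (h : s ≤ t) (f : X → ℝ) : s ≤ Setoid.ker (condMean t f) :=
  fun _ _ hxy ↦ condMean_eq_of_rel (h hxy) f

theorem condMean_mono (hfg : ∀ y, s y x → f y ≤ g y) : condMean s f x ≤ condMean s g x := by
  classical
  exact expect_le_expect fun y hy ↦ hfg y (mem_filter.1 hy).2

theorem condMean_add (f g : X → ℝ) (x : X) :
    condMean s (f + g) x = condMean s f x + condMean s g x :=
  expect_add_distrib ..

theorem condMean_sub (f g : X → ℝ) (x : X) :
    condMean s (f - g) x = condMean s f x - condMean s g x :=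
  expect_sub_distrib ..

theorem condMean_const (a : ℝ) (x : X) : condMean s (fun _ ↦ a) x = a := by
  classical
  exact expect_const ⟨x, by simp⟩ a

theorem condMean_mul_of_le_ker (h : s ≤ Setoid.ker g) (f : X → ℝ) (x : X) :
    condMean s (f * g) x = condMean s f x * g x := by
  classical
  rw [condMean, condMean, expect_mul]
  exact expect_congr rfl fun y hy ↦ congrArg (f y * ·) (h (mem_filter.1 hy).2)

theorem abs_condMean_le (s : Setoid X) (f : X → ℝ) (x : X) :
    |condMean s f x| ≤ condMean s (fun y ↦ |f y|) x :=
  abs_expect_le ..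

theorem abs_condMean_le_of_le {a : ℝ} (hf : ∀ y, |f y| ≤ a) (x : X) : |condMean s f x| ≤ a :=
  (abs_condMean_le s f x).trans <|
    (condMean_mono fun y _ ↦ hf y).trans_eq (condMean_const a x)

theorem condMean_nonneg (hf : ∀ y, 0 ≤ f y) (x : X) : 0 ≤ condMean s f x :=
  expect_nonneg fun y _ ↦ hf y

theorem condMean_indicator_nonneg (A : Set X) (x : X) : 0 ≤ condMean s (A.indicator 1) x :=
  condMean_nonneg (Set.indicator_nonneg fun _ _ ↦ zero_le_one) x

theorem condMean_indicator_le_one (A : Set X) (x : X) : condMean s (A.indicator 1) x ≤ 1 :=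
  (le_abs_self _).trans (abs_condMean_le_of_le (abs_indicator_one_le A) x)

theorem density_mul_condMean (s : Setoid X) (f : X → ℝ) (x : X) :
    density s x * condMean s f x = 𝔼 y, {y | s y x}.indicator f y := by
  classical
  have hne : (#{y | s y x} : ℝ) ≠ 0 :=
    Nat.cast_ne_zero.2 <| card_ne_zero_of_mem (mem_filter.2 ⟨mem_univ x, s.refl x⟩)
  simp only [density, condMean, Set.indicator_apply, Set.mem_ofPred_eq, Pi.one_apply,
    expect_eq_sum_div_card, sum_boole, ← sum_filter]
  field_simp

theorem density_pos (s : Setoid X) (x : X) : 0 < density s x :=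
  expect_pos' (fun _ _ ↦ Set.indicator_nonneg (fun _ _ ↦ zero_le_one) _)
    ⟨x, mem_univ x, by simp⟩

theorem condMean_eq_div_density (s : Setoid X) (f : X → ℝ) (x : X) :
    condMean s f x = (𝔼 y, {y | s y x}.indicator f y) / density s x :=
  eq_div_of_mul_eq (density_pos s x).ne' (mul_comm _ (density s x) ▸ density_mul_condMean s f x)

theorem expect_condMean (s : Setoid X) (f : X → ℝ) : 𝔼 x, condMean s f x = 𝔼 x, f x := by
  classical
  have hcard (x y : X) (h : s y x) : #{z | s z x} = #{z | s z y} :=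
    congrArg card (filter_congr fun z _ ↦
      ⟨fun hz ↦ s.trans hz (s.symm h), fun hz ↦ s.trans hz h⟩)
  have hsum : ∑ x, condMean s f x = ∑ y, f y := by
    calc ∑ x, condMean s f x
        = ∑ x, ∑ y, if s y x then f y / #{z | s z y} else 0 := by
          refine sum_congr rfl fun x _ ↦ ?_
          rw [condMean, expect_eq_sum_div_card, sum_div, sum_filter]
          exact sum_congr rfl fun y _ ↦ if_ctx_congr Iff.rfl (fun h ↦ by rw [hcard x y h])
            fun _ ↦ rfl
      _ = ∑ y, f y := by
          rw [sum_comm]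
          refine sum_congr rfl fun y _ ↦ ?_
          have hne : (#{z | s z y} : ℝ) ≠ 0 :=
            Nat.cast_ne_zero.2 <| card_ne_zero_of_mem (mem_filter.2 ⟨mem_univ y, s.refl y⟩)
          simp only [s.comm' (x := y), ← sum_filter, sum_const, nsmul_eq_mul]
          field_simp
  simp only [Fintype.expect_eq_sum_div_card, hsum]

theorem expect_condMean_mul (h : s ≤ Setoid.ker g) (f : X → ℝ) :
    𝔼 x, condMean s f x * g x = 𝔼 x, f x * g x := by
  simp only [← condMean_mul_of_le_ker h, expect_condMean, Pi.mul_apply]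

theorem expect_sq_condMean_sub (h : t ≤ s) (f : X → ℝ) :
    𝔼 x, (condMean t f x - condMean s f x) ^ 2 = energy t f - energy s f := by
  have hcross : 𝔼 x, condMean t f x * condMean s f x = energy s f := by
    rw [expect_condMean_mul (le_ker_condMean h f), ← expect_condMean_mul (le_ker_condMean le_rfl f)]
    simp only [energy, sq]
  calc 𝔼 x, (condMean t f x - condMean s f x) ^ 2
      = energy t f - 2 * 𝔼 x, condMean t f x * condMean s f x + energy s f := by
        simp only [energy, mul_expect, ← expect_sub_distrib, ← expect_add_distrib]
        exact expect_congr rfl fun x _ ↦ by ring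
    _ = energy t f - energy s f := by rw [hcross]; ring

theorem energy_nonneg (s : Setoid X) (f : X → ℝ) : 0 ≤ energy s f :=
  expect_nonneg fun _ _ ↦ sq_nonneg _

theorem energy_mono (h : t ≤ s) (f : X → ℝ) : energy s f ≤ energy t f :=
  sub_nonneg.1 <| (expect_sq_condMean_sub h f).symm ▸ expect_nonneg fun _ _ ↦ sq_nonneg _

theorem expect_le_one_of_le (hf : ∀ x, f x ≤ 1) : 𝔼 x, f x ≤ 1 := by
  rw [Fintype.expect_eq_sum_div_card]
  refine div_le_one_of_le₀ ?_ (Nat.cast_nonneg _)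
  simpa using sum_le_card_nsmul univ f 1 fun x _ ↦ hf x

theorem energy_le_one (hf : ∀ x, |f x| ≤ 1) : energy s f ≤ 1 :=
  expect_le_one_of_le fun x ↦ (sq_le_one_iff_abs_le_one _).2 (abs_condMean_le_of_le hf x)

theorem sq_expect_sub_condMean_mul_le (hts : t ≤ s) (htg : t ≤ Setoid.ker g)
    (hg : ∀ x, |g x| ≤ 1) (f : X → ℝ) :
    (𝔼 x, (f x - condMean s f x) * g x) ^ 2 ≤ energy t f - energy s f := by
  have hproj : 𝔼 x, (f x - condMean s f x) * g x
      = 𝔼 x, (condMean t f x - condMean s f x) * g x := by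
    simp only [sub_mul, expect_sub_distrib, expect_condMean_mul htg]
  calc (𝔼 x, (f x - condMean s f x) * g x) ^ 2
      ≤ (𝔼 x, (condMean t f x - condMean s f x) ^ 2) * 𝔼 x, g x ^ 2 := by
        rw [hproj]
        exact expect_mul_sq_le_sq_mul_sq ..
    _ ≤ 𝔼 x, (condMean t f x - condMean s f x) ^ 2 :=
        mul_le_of_le_one_right (expect_nonneg fun _ _ ↦ sq_nonneg _) <|
          expect_le_one_of_le fun x ↦ (sq_le_one_iff_abs_le_one _).2 (hg x)
    _ = energy t f - energy s f := expect_sq_condMean_sub hts f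

theorem mul_expect_indicator_le {σ : ℝ} (hf : ∀ x, 0 ≤ f x) {A : Set X} (hA : ∀ x ∈ A, σ ≤ f x) :
    σ * 𝔼 x, A.indicator 1 x ≤ 𝔼 x, f x := by
  rw [mul_expect]
  refine expect_le_expect fun x _ ↦ ?_
  by_cases hx : x ∈ A
  · simpa [hx] using hA x hx
  · simpa [hx] using hf x

theorem expect_indicator_union_le (A B : Set X) :
    𝔼 x, (A ∪ B).indicator (1 : X → ℝ) x ≤
      𝔼 x, A.indicator (1 : X → ℝ) x + 𝔼 x, B.indicator (1 : X → ℝ) x := by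
  rw [← expect_add_distrib]
  refine expect_le_expect fun x _ ↦ ?_
  by_cases hA : x ∈ A <;> by_cases hB : x ∈ B <;> simp [hA, hB]

section Color

variable {c : X → ℕ}

theorem density_inf_ker (s : Setoid X) (c : X → ℕ) (x : X) :
    density (s ⊓ Setoid.ker c) x =
      density s x * condMean s ({y | c y = c x}.indicator 1) x := by
  rw [density_mul_condMean, Set.indicator_indicator]
  rfl

theorem condMean_indicator_color (s : Setoid X) (c : X → ℕ) (f : X → ℝ) (x : X) :
    condMean s ({y | c y = c x}.indicator f) x =
      condMean s ({y | c y = c x}.indicator 1) x * condMean (s ⊓ Setoid.ker c) f x := by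
  refine mul_left_cancel₀ (density_pos s x).ne' ?_
  rw [← mul_assoc, ← density_inf_ker, density_mul_condMean, density_mul_condMean,
    Set.indicator_indicator]
  rfl

theorem expect_indicator_color_le {k : ℕ} (hc : ∀ x, c x < k) {B : ℕ → Set X} {p : ℝ}
    (hB : ∀ a < k, 𝔼 x, ({x | c x = a} ∩ B a).indicator 1 x ≤ p) :
    𝔼 x, {x | x ∈ B (c x)}.indicator 1 x ≤ k * p := by
  calc 𝔼 x, {x | x ∈ B (c x)}.indicator (1 : X → ℝ) x
      ≤ 𝔼 x, ∑ a ∈ range k, ({x | c x = a} ∩ B a).indicator (1 : X → ℝ) x := by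
        refine expect_le_expect fun x _ ↦ ?_
        have hx : {x | x ∈ B (c x)}.indicator (1 : X → ℝ) x
            = ({y | c y = c x} ∩ B (c x)).indicator 1 x := by
          classical simp [Set.indicator_apply]
        rw [hx]
        exact single_le_sum (f := fun a ↦ ({x | c x = a} ∩ B a).indicator (1 : X → ℝ) x)
          (fun a _ ↦ Set.indicator_nonneg (fun _ _ ↦ zero_le_one) x) (mem_range.2 (hc x))
    _ = ∑ a ∈ range k, 𝔼 x, ({x | c x = a} ∩ B a).indicator (1 : X → ℝ) x :=
        expect_sum_comm ..
    _ ≤ k * p := by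
        simpa using sum_le_card_nsmul (range k) _ p fun a ha ↦ hB a (mem_range.1 ha)

theorem expect_indicator_condMean_color_lt_le {k : ℕ} (hc : ∀ x, c x < k) (s : Setoid X) {τ : ℝ}
    (hτ : 0 ≤ τ) :
    𝔼 x, {x | condMean s ({y | c y = c x}.indicator 1) x < τ}.indicator 1 x ≤ k * τ := by
  refine expect_indicator_color_le (B := fun a ↦ {x | condMean s ({y | c y = a}.indicator 1) x < τ})
    hc fun a _ ↦ ?_
  set D : Set X := {x | condMean s ({y | c y = a}.indicator 1) x < τ} with hD
  have hker : s ≤ Setoid.ker (D.indicator (1 : X → ℝ)) := fun x y hxy ↦ by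
    classical
    simp only [Setoid.ker_def, Set.indicator_apply, hD, Set.mem_ofPred_eq, condMean_eq_of_rel hxy,
      Pi.one_apply]
  calc 𝔼 x, ({x | c x = a} ∩ D).indicator 1 x
      = 𝔼 x, condMean s ({y | c y = a}.indicator 1) x * D.indicator 1 x := by
        rw [expect_condMean_mul hker]
        simp only [Set.inter_indicator_one, Pi.mul_apply]
    _ ≤ 𝔼 x, τ * D.indicator 1 x := expect_le_expect fun x _ ↦ by
        by_cases hx : x ∈ D
        · simpa [hx] using hx.le
        · simp [hx]
    _ ≤ τ := by
        rw [← mul_expect]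
        exact mul_le_of_le_one_right hτ <|
          expect_le_one_of_le fun x ↦ (le_abs_self _).trans (abs_indicator_one_le D x)

theorem expect_indicator_lt_condMean_color_le {k : ℕ} (hc : ∀ x, c x < k) (s : Setoid X)
    {E : ℕ → Set X} {σ μ : ℝ} (hσ : 0 < σ) (hE : ∀ a < k, 𝔼 x, (E a).indicator 1 x ≤ μ) :
    𝔼 x, {x | σ < condMean s ((E (c x)).indicator 1) x}.indicator 1 x ≤ k * (μ / σ) := by
  refine expect_indicator_color_le (B := fun a ↦ {x | σ < condMean s ((E a).indicator 1) x})
    hc fun a ha ↦ ?_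
  rw [le_div_iff₀' hσ]
  calc σ * 𝔼 x, ({x | c x = a} ∩ {x | σ < condMean s ((E a).indicator 1) x}).indicator 1 x
      ≤ 𝔼 x, condMean s ((E a).indicator 1) x :=
        mul_expect_indicator_le (condMean_indicator_nonneg _) fun x hx ↦ le_of_lt hx.2
    _ ≤ μ := (expect_condMean s _).trans_le (hE a ha)

end Color

theorem abs_condMean_inter_sub_le (s : Setoid X) (A G : Set X) (f : X → ℝ) (d : ℝ) (x : X) :
    |condMean s ((A ∩ G).indicator 1) x - d * condMean s (G.indicator 1) x| ≤
      |𝔼 y, ({y | s y x} ∩ G).indicator (A.indicator 1 - f) y| / density s x +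
        condMean s (fun y ↦ |f y - d|) x := by
  have hsplit : condMean s ((A ∩ G).indicator 1) x - d * condMean s (G.indicator 1) x =
      condMean s (G.indicator (A.indicator 1 - f)) x +
        condMean s (G.indicator fun y ↦ f y - d) x := by
    have hconst := condMean_mul_of_le_ker (s := s) (g := fun _ ↦ d) (fun _ _ _ ↦ rfl)
      (G.indicator 1) x
    rw [mul_comm d, ← hconst, ← condMean_sub, ← condMean_add]
    refine condMean_congr fun y _ ↦ ?_
    by_cases hG : y ∈ G
    · by_cases hA : y ∈ A <;> simp [hG, hA]; ring
    · simp [hG]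
  have hcell : |condMean s (G.indicator (A.indicator 1 - f)) x| =
      |𝔼 y, ({y | s y x} ∩ G).indicator (A.indicator 1 - f) y| / density s x := by
    rw [condMean_eq_div_density, abs_div, abs_of_pos (density_pos s x), Set.indicator_indicator]
  have hdev : |condMean s (G.indicator fun y ↦ f y - d) x| ≤ condMean s (fun y ↦ |f y - d|) x := by
    refine (abs_condMean_le ..).trans (condMean_mono fun y _ ↦ ?_)
    by_cases hG : y ∈ G <;> simp [hG]
  rw [hsplit]
  exact (abs_add_le _ _).trans (add_le_add hcell.le hdev)

end ConditionalMean

section Coloring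

variable {J V : Type*} {I K : Finset J} {𝒟 𝒟' : Finset (Finset J)}
  {b b' : Finset J → (J → V) → ℕ} {m : ℕ} {x y : J → V}

/-- Two maps have the same `𝒟`-pattern if each of the functions `b K` with `K ∈ 𝒟` takes the same
value at them. Typically `b K x` is the colour of the restriction of `x` to `K`. -/
def pattern (b : Finset J → (J → V) → ℕ) (𝒟 : Finset (Finset J)) : Setoid (J → V) where
  r x y := ∀ K ∈ 𝒟, b K x = b K y
  iseqv :=
    ⟨fun _ _ _ ↦ rfl, fun h K hK ↦ (h K hK).symm, fun h h' K hK ↦ (h K hK).trans (h' K hK)⟩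

/-- A colouring with `m` colours, for each `K`, of the maps `K → V`. A map `K → V` is encoded by
any of its extensions to `J`. -/
structure IsColoring (m : ℕ) (b : Finset J → (J → V) → ℕ) : Prop where
  dependsOn : ∀ K, DependsOn (b K) (K : Set J)
  lt : ∀ K x, b K x < m

theorem IsColoring.mono {m' : ℕ} (hb : IsColoring m b) (h : m ≤ m') : IsColoring m' b :=
  ⟨hb.dependsOn, fun K x ↦ (hb.lt K x).trans_le h⟩

theorem pattern_anti (h : 𝒟 ⊆ 𝒟') : pattern b 𝒟' ≤ pattern b 𝒟 :=
  fun _ _ hxy K hK ↦ hxy K (h hK)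

theorem pattern_le_pattern (h : ∀ K ∈ 𝒟, (b K).FactorsThrough (b' K)) :
    pattern b' 𝒟 ≤ pattern b 𝒟 :=
  fun _ _ hxy K hK ↦ h K hK (hxy K hK)

theorem pattern_rel_of_eqOn (hb : ∀ K ∈ 𝒟, DependsOn (b K) (K : Set J)) (hI : ∀ K ∈ 𝒟, K ⊆ I)
    (hxy : ∀ i ∈ I, x i = y i) : pattern b 𝒟 x y :=
  fun K hK ↦ hb K hK fun i hi ↦ hxy i (hI K hK hi)

/-- An intersection of sets of maps `J → V`, each of them determined by the coordinates in some set
that does not contain `I`. -/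
def IsCylinderInter (I : Finset J) (W : Set (J → V)) : Prop :=
  ∃ U : Finset J → Set (J → V), (∀ K, DependsOn (· ∈ U K) (K : Set J)) ∧
    W = {x | ∀ K, ¬ I ⊆ K → x ∈ U K}

theorem isCylinderInter_univ (I : Finset J) : IsCylinderInter I (Set.univ : Set (J → V)) :=
  ⟨fun _ ↦ Set.univ, fun _ _ _ _ ↦ rfl, by simp⟩

theorem IsCylinderInter.inter {W W' : Set (J → V)} (hW : IsCylinderInter I W)
    (hW' : IsCylinderInter I W') : IsCylinderInter I (W ∩ W') := by
  obtain ⟨U, hU, rfl⟩ := hW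
  obtain ⟨U', hU', rfl⟩ := hW'
  refine ⟨fun K ↦ U K ∩ U' K, fun K x y hxy ↦ congrArg₂ And (hU K hxy) (hU' K hxy), ?_⟩
  ext x
  simp only [Set.mem_inter_iff, Set.mem_ofPred_eq, ← forall_and]

theorem isCylinderInter_of_dependsOn {W : Set (J → V)} (hW : DependsOn (· ∈ W) (K : Set J))
    (hK : ¬ I ⊆ K) : IsCylinderInter I W := by
  refine ⟨fun L ↦ {x | L = K → x ∈ W}, fun L x y hxy ↦ ?_, ?_⟩
  · exact propext <| forall_congr' fun hL ↦ Iff.of_eq (hW (hL ▸ hxy))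
  · ext x
    exact ⟨fun hx L _ _ ↦ hx, fun hx ↦ hx K hK rfl⟩

theorem isCylinderInter_setOf_pattern (hb : ∀ K ∈ 𝒟, DependsOn (b K) (K : Set J))
    (hI : ∀ K ∈ 𝒟, ¬ I ⊆ K) (x : J → V) : IsCylinderInter I {y | pattern b 𝒟 y x} := by
  refine ⟨fun K ↦ {y | K ∈ 𝒟 → b K y = b K x}, fun K y z hyz ↦ ?_, ?_⟩
  · exact propext <| forall_congr' fun hK ↦ by rw [hb K hK hyz]
  · ext y
    exact ⟨fun hy K _ hK ↦ hy K hK, fun hy K hK ↦ hy K (hI K hK) hK⟩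

theorem exists_coloring_splitting (hb : IsColoring m b) {U : Finset J → Set (J → V)}
    (hU : ∀ K, DependsOn (· ∈ U K) (K : Set J)) :
    ∃ b', IsColoring (2 * m) b' ∧ (∀ K, (b K).FactorsThrough (b' K)) ∧
      ∀ K x y, b' K x = b' K y → (x ∈ U K ↔ y ∈ U K) := by
  classical
  refine ⟨fun K x ↦ 2 * b K x + if x ∈ U K then 1 else 0, ⟨fun K x y hxy ↦ ?_, fun K x ↦ ?_⟩,
    fun K x y hxy ↦ ?_, fun K x y hxy ↦ ?_⟩
  · simp only [hb.dependsOn K hxy, hU K hxy]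
  · have := hb.lt K x
    split_ifs <;> omega
  all_goals dsimp only at hxy; split_ifs at hxy <;> grind

theorem dependsOn_indicator_color {c : (J → V) → ℕ} (hc : DependsOn c (I : Set J)) (a : ℕ) :
    DependsOn ({y | c y = a}.indicator (1 : (J → V) → ℝ)) (I : Set J) := fun x y hxy ↦ by
  classical
  simp only [Set.indicator_apply, Set.mem_ofPred_eq, hc hxy, Pi.one_apply]

variable [Fintype J] [DecidableEq J] [Fintype V]

theorem dependsOn_condMean_pattern (hb : ∀ K ∈ 𝒟, DependsOn (b K) (K : Set J))
    (hI : ∀ K ∈ 𝒟, K ⊆ I) (f : (J → V) → ℝ) :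
    DependsOn (condMean (pattern b 𝒟) f) (I : Set J) :=
  fun _ _ hxy ↦ condMean_eq_of_rel (pattern_rel_of_eqOn hb hI hxy) f

theorem expect_expect_piecewise (I : Finset J) (f : (J → V) → ℝ) :
    𝔼 y : J → V, 𝔼 x : J → V, f (I.piecewise x y) = 𝔼 x, f x := by
  let swap : (J → V) × (J → V) → (J → V) × (J → V) :=
    fun p ↦ (I.piecewise p.1 p.2, I.piecewise p.2 p.1)
  have hswap : Function.Involutive swap := fun p ↦ by
    ext i <;> by_cases hi : i ∈ I <;> simp [swap, hi]
  rcases isEmpty_or_nonempty (J → V) with _ | _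
  · simp
  calc 𝔼 y : J → V, 𝔼 x : J → V, f (I.piecewise x y)
      = 𝔼 p : (J → V) × (J → V), f (swap p).1 := by
        rw [expect_comm]
        exact (expect_product univ univ fun p : (J → V) × (J → V) ↦ f (swap p).1).symm
    _ = 𝔼 p : (J → V) × (J → V), f p.1 :=
        Fintype.expect_equiv hswap.toPerm _ _ fun _ ↦ rfl
    _ = 𝔼 x, f x := by
        rw [← univ_product_univ, expect_product univ univ fun p : (J → V) × (J → V) ↦ f p.1]
        simp only [Fintype.expect_const]

theorem exists_abs_expect_le_abs_expect_piecewise [Nonempty (J → V)] (I : Finset J)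
    (f : (J → V) → ℝ) : ∃ y : J → V, |𝔼 x, f x| ≤ |𝔼 x : J → V, f (I.piecewise x y)| := by
  obtain ⟨y, -, hy⟩ := exists_le_of_le_expect (univ_nonempty (α := J → V)) <|
    (congrArg abs (expect_expect_piecewise I f)).symm.trans_le (abs_expect_le ..)
  exact ⟨y, hy⟩

-- Freezing the coordinates outside `I` turns a set determined by the coordinates in `K` into one
-- determined by the coordinates in `K ∩ I`, and `K ∩ I ⊂ I` unless `I ⊆ K`.
theorem exists_abs_expect_indicator_le {ψ : (J → V) → ℝ} (hψ : DependsOn ψ (I : Set J))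
    {W : Set (J → V)} (hW : IsCylinderInter I W) :
    ∃ U : Finset J → Set (J → V), (∀ K, DependsOn (· ∈ U K) (K : Set J)) ∧
      |𝔼 x, W.indicator ψ x| ≤ |𝔼 x, {x | ∀ K ∈ I.ssubsets, x ∈ U K}.indicator ψ x| := by
  obtain ⟨U, hU, rfl⟩ := hW
  rcases isEmpty_or_nonempty (J → V) with _ | _
  · exact ⟨U, hU, by simp⟩
  obtain ⟨y, hy⟩ := exists_abs_expect_le_abs_expect_piecewise I
    ({x | ∀ K, ¬ I ⊆ K → x ∈ U K}.indicator ψ)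
  refine ⟨fun L ↦ {x | ∀ K, K ∩ I = L → I.piecewise x y ∈ U K}, fun L x z hxz ↦ ?_,
    hy.trans_eq (congrArg abs (expect_congr rfl fun x _ ↦ ?_))⟩
  · refine propext <| forall₂_congr fun K hK ↦ Iff.of_eq <| hU K fun i hi ↦ ?_
    by_cases hiI : i ∈ I
    · simpa [hiI] using hxz i (hK ▸ mem_inter.2 ⟨hi, hiI⟩)
    · simp [hiI]
  · have hmem : (∀ K, ¬ I ⊆ K → I.piecewise x y ∈ U K) ↔
        ∀ L ∈ I.ssubsets, ∀ K, K ∩ I = L → I.piecewise x y ∈ U K := by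
      refine ⟨fun h L hL K hK ↦ h K fun hIK ↦ (mem_ssubsets.1 hL).2 ?_, fun h K hK ↦
        h _ (mem_ssubsets.2 ⟨inter_subset_right, fun hI ↦ hK fun i hi ↦ ?_⟩) K rfl⟩
      · exact hK ▸ subset_inter hIK Subset.rfl
      · exact (mem_inter.1 (hI hi)).1
    have hval : ψ (I.piecewise x y) = ψ x := hψ fun i hi ↦ I.piecewise_eq_of_mem x y hi
    classical
    simp only [Set.indicator_apply, Set.mem_ofPred_eq, hmem, hval]

end Coloring

section Regularity

universe u

variable {J : Type*} [Fintype J] [DecidableEq J]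

/-- `φ` is `β`-uniform with respect to the colouring `b` if the difference between `φ` and its
conditional expectation given the colours of the proper subsets of `I` correlates by at most `β`
with every intersection of cylinders that do not determine all the coordinates in `I`. -/
def IsUniform {V : Type*} [Fintype V] (I : Finset J) (φ : (J → V) → ℝ)
    (b : Finset J → (J → V) → ℕ) (β : ℝ) : Prop :=
  ∀ W, IsCylinderInter I W →
    |𝔼 x, W.indicator (φ - condMean (pattern b I.ssubsets) φ) x| ≤ β

section Increment

variable {V : Type*} [Fintype V] {I : Finset J} {b : Finset J → (J → V) → ℕ} {m : ℕ}

theorem exists_energy_add_sq_le {φ : (J → V) → ℝ} {β : ℝ} (hb : IsColoring m b)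
    (hφ : DependsOn φ (I : Set J)) (hβ : 0 ≤ β) (h : ¬ IsUniform I φ b β) :
    ∃ b', IsColoring (2 * m) b' ∧ (∀ K, (b K).FactorsThrough (b' K)) ∧
      energy (pattern b I.ssubsets) φ + β ^ 2 ≤ energy (pattern b' I.ssubsets) φ := by
  simp only [IsUniform, not_forall, not_le] at h
  obtain ⟨W, hW, hβW⟩ := h
  have hmean : DependsOn (condMean (pattern b I.ssubsets) φ) (I : Set J) :=
    dependsOn_condMean_pattern (fun K _ ↦ hb.dependsOn K) (fun K hK ↦ (mem_ssubsets.1 hK).1) φ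
  obtain ⟨U, hU, hWU⟩ := exists_abs_expect_indicator_le
    (fun x y hxy ↦ congrArg₂ (· - ·) (hφ hxy) (hmean hxy) :
      DependsOn (φ - condMean (pattern b I.ssubsets) φ) (I : Set J)) hW
  obtain ⟨b', hb', hbb', hsplit⟩ := exists_coloring_splitting hb hU
  refine ⟨b', hb', hbb', ?_⟩
  set g : (J → V) → ℝ := {x | ∀ K ∈ I.ssubsets, x ∈ U K}.indicator 1 with hg
  have hker : pattern b' I.ssubsets ≤ Setoid.ker g := fun x y hxy ↦ by
    have hmem : (∀ K ∈ I.ssubsets, x ∈ U K) ↔ ∀ K ∈ I.ssubsets, y ∈ U K :=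
      forall₂_congr fun K hK ↦ hsplit K x y (hxy K hK)
    classical
    simp only [Setoid.ker_def, hg, Set.indicator_apply, Set.mem_ofPred_eq, hmem, Pi.one_apply]
  have hgain := sq_expect_sub_condMean_mul_le (pattern_le_pattern fun K _ ↦ hbb' K) hker
    (abs_indicator_one_le _) φ
  have hcorr : β < |𝔼 x, (φ x - condMean (pattern b I.ssubsets) φ x) * g x| := by
    refine (hβW.trans_le hWU).trans_eq (congrArg abs (expect_congr rfl fun x _ ↦ ?_))
    rw [hg, ← Pi.sub_apply, ← Set.indicator_mul_right, Pi.one_def]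
    simp only [mul_one]
    rfl
  have := pow_le_pow_left₀ hβ hcorr.le 2
  rw [sq_abs] at this
  linarith

/-- The total energy of the functions `φ a`, `a ∈ A`, with respect to the colours of the proper
subsets of `I`. -/
noncomputable def totalEnergy {κ : Type*} (A : Finset κ) (φ : κ → (J → V) → ℝ) (I : Finset J)
    (b : Finset J → (J → V) → ℕ) : ℝ :=
  ∑ a ∈ A, energy (pattern b I.ssubsets) (φ a)

variable {κ : Type*} {A : Finset κ} {φ : κ → (J → V) → ℝ}

theorem totalEnergy_nonneg : 0 ≤ totalEnergy A φ I b :=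
  sum_nonneg fun _ _ ↦ energy_nonneg ..

theorem totalEnergy_le_card (hφ : ∀ a ∈ A, ∀ x, |φ a x| ≤ 1) : totalEnergy A φ I b ≤ #A := by
  simpa [totalEnergy] using sum_le_card_nsmul A _ 1 fun a ha ↦ energy_le_one (hφ a ha)

theorem totalEnergy_add_le {b' : Finset J → (J → V) → ℕ}
    (h : ∀ K, (b K).FactorsThrough (b' K)) {a : κ} (ha : a ∈ A) {δ : ℝ}
    (hδ : energy (pattern b I.ssubsets) (φ a) + δ ≤ energy (pattern b' I.ssubsets) (φ a)) :
    totalEnergy A φ I b + δ ≤ totalEnergy A φ I b' := by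
  classical
  rw [totalEnergy, totalEnergy, ← add_sum_erase A _ ha, ← add_sum_erase A _ ha]
  have := sum_le_sum fun a' (_ : a' ∈ A.erase a) ↦
    energy_mono (pattern_le_pattern (𝒟 := I.ssubsets) fun K _ ↦ h K) (φ a')
  linarith

/-- Weak regularity lemma. The energy hypothesis says that at most `t` increments by `β ^ 2` are
possible. -/
theorem exists_isUniform {β : ℝ} (hβ : 0 ≤ β) (hφ : ∀ a ∈ A, DependsOn (φ a) (I : Set J))
    (hφ1 : ∀ a ∈ A, ∀ x, |φ a x| ≤ 1) (t : ℕ) :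
    ∀ {m : ℕ} {b : Finset J → (J → V) → ℕ}, IsColoring m b →
      #A - t * β ^ 2 < totalEnergy A φ I b →
      ∃ b', IsColoring (2 ^ t * m) b' ∧ (∀ K, (b K).FactorsThrough (b' K)) ∧
        ∀ a ∈ A, IsUniform I (φ a) b' β := by
  induction t with
  | zero =>
    intro m b _ h
    exact absurd (totalEnergy_le_card hφ1) (by simpa using h)
  | succ t ih =>
    intro m b hb h
    by_cases hunif : ∀ a ∈ A, IsUniform I (φ a) b β
    · exact ⟨b, hb.mono (Nat.le_mul_of_pos_left m (by positivity)), fun _ _ _ h ↦ h, hunif⟩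
    push Not at hunif
    obtain ⟨a, ha, hnot⟩ := hunif
    obtain ⟨b₁, hb₁, hbb₁, hgain⟩ := exists_energy_add_sq_le hb (hφ a ha) hβ hnot
    obtain ⟨b₂, hb₂, hb₁₂, hunif⟩ := ih hb₁ <| by
      have := totalEnergy_add_le hbb₁ ha hgain
      push_cast at h
      linarith
    exact ⟨b₂, by rwa [pow_succ, mul_assoc], fun K _ _ h ↦ hbb₁ K (hb₁₂ K h), hunif⟩

end Increment

/-- Strong regularity lemma. The energy hypothesis says that at most `t` increments by `δ` are
possible. The uniformity of the fine colouring `b₂` is allowed to depend on the number of colours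
of the coarse colouring `b₁`. -/
theorem exists_strong_regularization {κ : Type*} (A : Finset κ) (I : Finset J) (δ : ℝ)
    {β : ℕ → ℝ} (hβ : ∀ m, 0 < β m) (t : ℕ) :
    ∀ m : ℕ, ∃ M, ∀ {V : Type u} [Fintype V] {φ : κ → (J → V) → ℝ}
      {b : Finset J → (J → V) → ℕ}, IsColoring m b → (∀ a ∈ A, DependsOn (φ a) (I : Set J)) →
      (∀ a ∈ A, ∀ x, |φ a x| ≤ 1) → #A - t * δ < totalEnergy A φ I b →
      ∃ m' ≤ M, ∃ b₁ b₂, IsColoring m' b₁ ∧ (∀ K : Finset J, DependsOn (b₂ K) (K : Set J)) ∧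
        (∀ K, (b K).FactorsThrough (b₁ K)) ∧
        ∀ a ∈ A, 𝔼 x, (condMean (pattern b₂ I.ssubsets) (φ a) x -
            condMean (pattern b₁ I.ssubsets) (φ a) x) ^ 2 ≤ δ ∧
          IsUniform I (φ a) b₂ (β m') := by
  induction t with
  | zero =>
    refine fun m ↦ ⟨0, fun {V _ φ b} _ _ hφ1 h ↦ ?_⟩
    exact absurd (totalEnergy_le_card hφ1) (by simpa using h)
  | succ t ih =>
    intro m
    obtain ⟨T, hT⟩ := exists_nat_gt (#A / β m ^ 2)
    obtain ⟨M, hM⟩ := ih (2 ^ T * m)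
    refine ⟨max m M, fun {V _ φ b} hb hφ hφ1 h ↦ ?_⟩
    obtain ⟨b₂, hb₂, hbb₂, hunif⟩ := exists_isUniform (hβ m).le hφ hφ1 T hb <| by
      have := (div_lt_iff₀ (pow_pos (hβ m) 2)).1 hT
      linarith [totalEnergy_nonneg (A := A) (φ := φ) (I := I) (b := b)]
    by_cases hclose : ∀ a ∈ A, 𝔼 x, (condMean (pattern b₂ I.ssubsets) (φ a) x -
        condMean (pattern b I.ssubsets) (φ a) x) ^ 2 ≤ δ
    · exact ⟨m, le_max_left .., b, b₂, hb, hb₂.dependsOn, fun _ _ _ h ↦ h,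
        fun a ha ↦ ⟨hclose a ha, hunif a ha⟩⟩
    push Not at hclose
    obtain ⟨a, ha, hδ⟩ := hclose
    rw [expect_sq_condMean_sub (pattern_le_pattern fun K _ ↦ hbb₂ K)] at hδ
    obtain ⟨m', hm', b₃, b₄, hb₃, hb₄, hb₂₃, hreg⟩ := hM hb₂ hφ hφ1 <| by
      have := totalEnergy_add_le (φ := φ) hbb₂ ha (le_sub_iff_add_le'.1 hδ.le)
      push_cast at h
      linarith
    exact ⟨m', hm'.trans (le_max_right ..), b₃, b₄, hb₃, hb₄, fun K _ _ h ↦ hbb₂ K (hb₂₃ K h),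
      hreg⟩

end Regularity

section Typical

variable {J V : Type*} [DecidableEq J] {I S T : Finset J} {𝒟 : Finset (Finset J)}
  {b : Finset J → (J → V) → ℕ} {x : J → V}

/-- The pattern given by the colours of those sets of `𝒟` that are contained in `S`. -/
abbrev patternOn (b : Finset J → (J → V) → ℕ) (𝒟 : Finset (Finset J)) (S : Finset J) :
    Setoid (J → V) :=
  pattern b {K ∈ 𝒟 | K ⊆ S}

theorem patternOn_insert_of_not_subset (c : (J → V) → ℕ) (hI : I ∉ 𝒟) (hS : ¬ I ⊆ S) :
    patternOn (Function.update b I c) (insert I 𝒟) S = patternOn b 𝒟 S := by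
  ext x y
  refine ⟨fun h K hK ↦ ?_, fun h K hK ↦ ?_⟩ <;> rw [mem_filter] at hK
  · have hne : K ≠ I := ne_of_mem_of_not_mem hK.1 hI
    simpa [hne] using h K (mem_filter.2 ⟨mem_insert_of_mem hK.1, hK.2⟩)
  · have hne : K ≠ I := fun h ↦ hS (h ▸ hK.2)
    simpa [hne] using h K (mem_filter.2 ⟨mem_of_mem_insert_of_ne hK.1 hne, hK.2⟩)

theorem patternOn_insert_of_subset (c : (J → V) → ℕ) (hI : I ∉ 𝒟) (hS : I ⊆ S) :
    patternOn (Function.update b I c) (insert I 𝒟) S = patternOn b 𝒟 S ⊓ Setoid.ker c := by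
  ext x y
  refine ⟨fun h ↦ ⟨fun K hK ↦ ?_, ?_⟩, fun h K hK ↦ ?_⟩
  · rw [mem_filter] at hK
    have hne : K ≠ I := ne_of_mem_of_not_mem hK.1 hI
    simpa [hne] using h K (mem_filter.2 ⟨mem_insert_of_mem hK.1, hK.2⟩)
  · simpa using h I (mem_filter.2 ⟨mem_insert_self .., hS⟩)
  · rw [mem_filter] at hK
    obtain rfl | hne := eq_or_ne K I
    · simpa using h.2
    · simpa [hne] using h.1 K (mem_filter.2 ⟨mem_of_mem_insert_of_ne hK.1 hne, hK.2⟩)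

variable [Fintype J] [Fintype V]

/-- `x` is typical for the colouring `b` of the sets of `𝒟` if the cells of its patterns have
density at least `η`, and passing to a finer pattern increases the conditional probability of an
event determined by the coarser coordinates at most by the factor `C`, up to an error `ε`. -/
structure IsTypical (𝒟 : Finset (Finset J)) (b : Finset J → (J → V) → ℕ) (C ε η : ℝ)
    (x : J → V) : Prop where
  le_density : ∀ S, η ≤ density (patternOn b 𝒟 S) x
  condMean_le : ∀ {T S : Finset J}, T ⊆ S → ∀ {H : Set (J → V)},
    DependsOn (· ∈ H) (T : Set J) →
    condMean (patternOn b 𝒟 S) (H.indicator 1) x ≤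
      C * condMean (patternOn b 𝒟 T) (H.indicator 1) x + ε

theorem IsTypical.condMean_abs_sub_le {C ε η σ : ℝ} (hx : IsTypical 𝒟 b C ε η x) (hC : 0 ≤ C)
    {f d : (J → V) → ℝ} (hfd : ∀ y, |f y - d y| ≤ 1) (hσ : 0 ≤ σ) (hS : I ⊆ S)
    (hdS : patternOn b 𝒟 S ≤ Setoid.ker d)
    (hdep : DependsOn (· ∈ {y | σ < |f y - d y|}) (I : Set J))
    (hdev : condMean (patternOn b 𝒟 I) ({y | σ < |f y - d y|}.indicator 1) x ≤ σ) :
    condMean (patternOn b 𝒟 S) (fun y ↦ |f y - d x|) x ≤ σ + C * σ + ε := by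
  set E := {y | σ < |f y - d y|}
  calc condMean (patternOn b 𝒟 S) (fun y ↦ |f y - d x|) x
      ≤ condMean (patternOn b 𝒟 S) ((fun _ ↦ σ) + E.indicator 1) x := by
        refine condMean_mono fun y hy ↦ ?_
        rw [← show d y = d x from hdS hy]
        by_cases hyE : y ∈ E
        · simpa [hyE] using (hfd y).trans (le_add_of_nonneg_left hσ)
        · simpa [hyE] using not_lt.1 hyE
    _ = σ + condMean (patternOn b 𝒟 S) (E.indicator 1) x := by
        rw [condMean_add, condMean_const]
    _ ≤ σ + (C * condMean (patternOn b 𝒟 I) (E.indicator 1) x + ε) := by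
        gcongr
        exact hx.condMean_le hS hdep
    _ ≤ σ + C * σ + ε := by
        rw [add_assoc]
        gcongr

/-- At `x`, the event `A` has conditional probability about `d` given any pattern involving `I`,
and is almost independent of the cylinder intersections for `I`. -/
def HasRelativeDensity (𝒟 : Finset (Finset J)) (b : Finset J → (J → V) → ℕ) (I : Finset J)
    (A : Set (J → V)) (d θ : ℝ) (x : J → V) : Prop :=
  ∀ S, I ⊆ S → ∀ G, IsCylinderInter I G →
    |condMean (patternOn b 𝒟 S) ((A ∩ G).indicator 1) x -
      d * condMean (patternOn b 𝒟 S) (G.indicator 1) x| ≤ θ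

theorem HasRelativeDensity.abs_sub_le {A : Set (J → V)} {d θ : ℝ}
    (h : HasRelativeDensity 𝒟 b I A d θ x) (hS : I ⊆ S) :
    |condMean (patternOn b 𝒟 S) (A.indicator 1) x - d| ≤ θ := by
  have := h S hS Set.univ (isCylinderInter_univ I)
  rwa [Set.inter_univ, Set.indicator_univ, Pi.one_def, condMean_const, mul_one] at this

theorem HasRelativeDensity.three_quarters_mul_le {A : Set (J → V)} {d θ : ℝ}
    (h : HasRelativeDensity 𝒟 b I A d θ x) (hθd : 4 * θ ≤ d) (hS : I ⊆ S) :
    3 / 4 * d ≤ condMean (patternOn b 𝒟 S) (A.indicator 1) x := by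
  linarith [(abs_le.1 (h.abs_sub_le hS)).1]

section Insert

variable {c : (J → V) → ℕ} {H : Set (J → V)} {C d ε η θ σ : ℝ}

theorem IsTypical.condMean_inf_ker_le_of_subset (hx : IsTypical 𝒟 b C σ η x)
    (hc : DependsOn c (I : Set J)) (hA : HasRelativeDensity 𝒟 b I {y | c y = c x} d θ x)
    (hC : 0 ≤ C) (hε : 0 ≤ ε) (hd : 0 < d) (hθd : 4 * θ ≤ d) (hσ : σ ≤ ε * (3 / 4 * d))
    (hIT : I ⊆ T) (hTS : T ⊆ S) (hH : DependsOn (· ∈ H) (T : Set J)) :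
    condMean (patternOn b 𝒟 S ⊓ Setoid.ker c) (H.indicator 1) x ≤
      2 * C * condMean (patternOn b 𝒟 T ⊓ Setoid.ker c) (H.indicator 1) x + ε := by
  set A : Set (J → V) := {y | c y = c x}
  set q := condMean (patternOn b 𝒟 T ⊓ Setoid.ker c) (H.indicator 1) x
  have hCq : 0 ≤ C * q := mul_nonneg hC (condMean_indicator_nonneg H x)
  have hS_ge := hA.three_quarters_mul_le hθd (hIT.trans hTS)
  have hT_le := (abs_le.1 (hA.abs_sub_le hIT)).2
  have hAH : condMean (patternOn b 𝒟 S) ((A ∩ H).indicator 1) x ≤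
      C * (condMean (patternOn b 𝒟 T) (A.indicator 1) x * q) + σ := by
    have hdep : DependsOn (· ∈ A ∩ H) (T : Set J) := fun y z hyz ↦
      congrArg₂ And (congrArg (· = c x) (hc fun i hi ↦ hyz i (hIT hi))) (hH hyz)
    rw [← condMean_indicator_color, Set.indicator_indicator]
    exact hx.condMean_le hTS hdep
  refine le_of_mul_le_mul_left ?_ ((by positivity : 0 < 3 / 4 * d).trans_le hS_ge)
  rw [← condMean_indicator_color, Set.indicator_indicator]
  nlinarith [mul_le_mul_of_nonneg_left hS_ge hε, mul_le_mul_of_nonneg_left hS_ge hCq,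
    mul_le_mul_of_nonneg_left hT_le hCq]

theorem IsTypical.condMean_inf_ker_le_of_not_subset (hx : IsTypical 𝒟 b C σ η x)
    (hA : HasRelativeDensity 𝒟 b I {y | c y = c x} d θ x)
    (hC : 0 ≤ C) (hε : 0 ≤ ε) (hd : 0 < d) (hθd : 4 * θ ≤ d) (hσ : d * σ + θ ≤ ε * (3 / 4 * d))
    (hIS : I ⊆ S) (hIT : ¬ I ⊆ T) (hTS : T ⊆ S) (hH : DependsOn (· ∈ H) (T : Set J)) :
    condMean (patternOn b 𝒟 S ⊓ Setoid.ker c) (H.indicator 1) x ≤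
      2 * C * condMean (patternOn b 𝒟 T) (H.indicator 1) x + ε := by
  set q := condMean (patternOn b 𝒟 T) (H.indicator 1) x
  have hCq : 0 ≤ C * q := mul_nonneg hC (condMean_indicator_nonneg H x)
  have hS_ge := hA.three_quarters_mul_le hθd hIS
  have hAH := (abs_le.1 (hA S hIS H (isCylinderInter_of_dependsOn hH hIT))).2
  refine le_of_mul_le_mul_left ?_ ((by positivity : 0 < 3 / 4 * d).trans_le hS_ge)
  rw [← condMean_indicator_color, Set.indicator_indicator]
  nlinarith [mul_le_mul_of_nonneg_left hS_ge hε, mul_le_mul_of_nonneg_left hS_ge hCq,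
    mul_le_mul_of_nonneg_left (hx.condMean_le hTS hH) hd.le]

theorem IsTypical.insert {η' : ℝ} (hx : IsTypical 𝒟 b C σ η x) (hI : I ∉ 𝒟)
    (hc : DependsOn c (I : Set J)) (hA : HasRelativeDensity 𝒟 b I {y | c y = c x} d θ x)
    (hd : 0 < d) (hd1 : d ≤ 1) (hC : 0 ≤ C) (hε : 0 ≤ ε) (hε1 : ε ≤ 1) (hσθ : σ ≤ θ)
    (hθd : 4 * θ ≤ ε * d) (hη : 0 ≤ η) (hη' : η' ≤ η * (d / 2)) :
    IsTypical (insert I 𝒟) (Function.update b I c) (2 * C) ε η' x := by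
  have hεd : ε * d ≤ d := mul_le_of_le_one_left hd.le hε1
  have hεd' : ε * d ≤ ε := mul_le_of_le_one_right hε hd1
  have hεd0 : 0 ≤ ε * d := mul_nonneg hε hd.le
  refine ⟨fun S ↦ ?_, fun {T S} hTS H hH ↦ ?_⟩ <;> by_cases hS : I ⊆ S
  · rw [patternOn_insert_of_subset c hI hS, density_inf_ker]
    refine hη'.trans (mul_le_mul (hx.le_density S) ?_ (half_pos hd).le (density_pos _ _).le)
    linarith [hA.three_quarters_mul_le (hθd.trans hεd) hS]
  · rw [patternOn_insert_of_not_subset c hI hS]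
    refine (hη'.trans (mul_le_of_le_one_right hη ?_)).trans (hx.le_density S)
    linarith
  · rw [patternOn_insert_of_subset c hI hS]
    by_cases hT : I ⊆ T
    · rw [patternOn_insert_of_subset c hI hT]
      exact hx.condMean_inf_ker_le_of_subset hc hA hC hε hd (hθd.trans hεd) (by linarith) hT hTS hH
    · rw [patternOn_insert_of_not_subset c hI hT]
      refine hx.condMean_inf_ker_le_of_not_subset hA hC hε hd (hθd.trans hεd) ?_ hS hT hTS hH
      have hθ : 0 ≤ θ := (abs_nonneg _).trans (hA.abs_sub_le hS)
      linarith [mul_le_mul_of_nonneg_left hσθ hd.le, mul_le_mul_of_nonneg_left hd1 hθ]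
  · have hT : ¬ I ⊆ T := fun h ↦ hS (h.trans hTS)
    rw [patternOn_insert_of_not_subset c hI hS, patternOn_insert_of_not_subset c hI hT]
    have hCq := mul_nonneg hC (condMean_indicator_nonneg (s := patternOn b 𝒟 T) H x)
    linarith [hx.condMean_le hTS hH]

end Insert

end Typical

section Regularization

universe u

variable {J : Type*} [Fintype J] [DecidableEq J]

/-- The colouring `b` refines `c` on `𝒟`, and every `x` that avoids the exceptional sets `B K`,
`K ∈ 𝒟`, is typical for `b`. -/
structure IsRegularization {V : Type*} [Fintype V] (𝒟 : Finset (Finset J))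
    (c b : Finset J → (J → V) → ℕ) (B : Finset J → Set (J → V)) (ε η : ℝ) : Prop where
  dependsOn_color : ∀ K ∈ 𝒟, DependsOn (b K) (K : Set J)
  dependsOn_exceptional : ∀ K ∈ 𝒟, DependsOn (· ∈ B K) (K : Set J)
  factorsThrough : ∀ K ∈ 𝒟, (c K).FactorsThrough (b K)
  expect_exceptional_le : ∀ K ∈ 𝒟, 𝔼 x, (B K).indicator 1 x ≤ ε
  isTypical : ∀ x, (∀ K ∈ 𝒟, x ∉ B K) → IsTypical 𝒟 b (2 ^ #𝒟) ε η x

section Insert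

variable {V : Type*} [Fintype V] {I : Finset J} {𝒟 : Finset (Finset J)} {c : (J → V) → ℕ}
  {b b₁ b₂ : Finset J → (J → V) → ℕ} {C β δ ε η θ σ τ : ℝ} {k : ℕ} {x : J → V}

/-- The conditional density of the colour `a` of `c` given the colours of the proper subsets of
`I`. -/
noncomputable def colorDensity (b : Finset J → (J → V) → ℕ) (I : Finset J) (c : (J → V) → ℕ)
    (a : ℕ) : (J → V) → ℝ :=
  condMean (pattern b I.ssubsets) ({y | c y = a}.indicator 1)

/-- The set where the coarse colouring `b₁` and the fine colouring `b₂` give densities of the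
colour `a` that differ by more than `σ`. -/
def deviationSet (b₁ b₂ : Finset J → (J → V) → ℕ) (I : Finset J) (c : (J → V) → ℕ) (σ : ℝ)
    (a : ℕ) : Set (J → V) :=
  {y | σ < |colorDensity b₂ I c a y - colorDensity b₁ I c a y|}

/-- The exceptional set for `I`: the colour of `x` is too sparse, or its fine and coarse densities
deviate too often on the cell of `x`. -/
def exceptionalSet (𝒟 : Finset (Finset J)) (b b₁ b₂ : Finset J → (J → V) → ℕ) (I : Finset J)
    (c : (J → V) → ℕ) (σ τ : ℝ) : Set (J → V) :=
  {x | colorDensity b₁ I c (c x) x < τ} ∪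
    {x | σ < condMean (patternOn b 𝒟 I) ((deviationSet b₁ b₂ I c σ (c x)).indicator 1) x}

theorem dependsOn_colorDensity (hb : ∀ K, DependsOn (b K) (K : Set J)) (a : ℕ) :
    DependsOn (colorDensity b I c a) (I : Set J) :=
  dependsOn_condMean_pattern (fun K _ ↦ hb K) (fun _ hK ↦ (mem_ssubsets.1 hK).1) _

theorem abs_colorDensity_sub_le_one (b₁ b₂ : Finset J → (J → V) → ℕ) (a : ℕ) (y : J → V) :
    |colorDensity b₂ I c a y - colorDensity b₁ I c a y| ≤ 1 :=
  abs_sub_le_of_nonneg_of_le (condMean_indicator_nonneg ..) (condMean_indicator_le_one ..)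
    (condMean_indicator_nonneg ..) (condMean_indicator_le_one ..)

theorem dependsOn_deviationSet (hb₁ : ∀ K, DependsOn (b₁ K) (K : Set J))
    (hb₂ : ∀ K, DependsOn (b₂ K) (K : Set J)) (a : ℕ) :
    DependsOn (· ∈ deviationSet b₁ b₂ I c σ a) (I : Set J) := fun x y hxy ↦ by
  simp only [deviationSet, Set.mem_ofPred_eq, dependsOn_colorDensity hb₁ a hxy,
    dependsOn_colorDensity hb₂ a hxy]

theorem dependsOn_exceptionalSet (hc : DependsOn c (I : Set J))
    (hb : ∀ K ∈ 𝒟, DependsOn (b K) (K : Set J)) (hb₁ : ∀ K, DependsOn (b₁ K) (K : Set J)) :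
    DependsOn (· ∈ exceptionalSet 𝒟 b b₁ b₂ I c σ τ) (I : Set J) := fun x y hxy ↦ by
  have hmean := dependsOn_condMean_pattern (fun K hK ↦ hb K (mem_filter.1 hK).1)
    (fun K hK ↦ (mem_filter.1 hK).2) ((deviationSet b₁ b₂ I c σ (c y)).indicator 1) hxy
  simp only [exceptionalSet, Set.mem_union, Set.mem_ofPred_eq, hc hxy,
    dependsOn_colorDensity hb₁ (c y) hxy, hmean]

theorem expect_deviationSet_le (hσ : 0 < σ) {a : ℕ}
    (h : 𝔼 x, (colorDensity b₂ I c a x - colorDensity b₁ I c a x) ^ 2 ≤ δ) :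
    𝔼 x, (deviationSet b₁ b₂ I c σ a).indicator 1 x ≤ δ / σ ^ 2 := by
  rw [le_div_iff₀' (pow_pos hσ 2)]
  refine (mul_expect_indicator_le (fun _ ↦ sq_nonneg _) fun x hx ↦ ?_).trans h
  rw [← sq_abs (_ - _)]
  exact pow_le_pow_left₀ hσ.le (le_of_lt hx) 2

theorem expect_exceptionalSet_le (hc : ∀ x, c x < k) (hσ : 0 < σ) (hτ : 0 ≤ τ)
    (h : ∀ a < k, 𝔼 x, (colorDensity b₂ I c a x - colorDensity b₁ I c a x) ^ 2 ≤ δ) :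
    𝔼 x, (exceptionalSet 𝒟 b b₁ b₂ I c σ τ).indicator 1 x ≤ k * (τ + δ / σ ^ 3) := by
  have hsparse := expect_indicator_condMean_color_lt_le hc (pattern b₁ I.ssubsets) hτ
  have hdev := expect_indicator_lt_condMean_color_le hc (patternOn b 𝒟 I) hσ
    fun a ha ↦ expect_deviationSet_le hσ (h a ha)
  rw [div_div, ← pow_succ] at hdev
  rw [mul_add]
  exact (expect_indicator_union_le _ _).trans (add_le_add hsparse hdev)

theorem IsTypical.hasRelativeDensity (hx : IsTypical 𝒟 b C σ η x) (hC : 0 ≤ C) (hη : 0 < η)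
    (hσ : 0 ≤ σ) (hb : ∀ K ∈ 𝒟, DependsOn (b K) (K : Set J)) (h𝒟 : ∀ K ∈ 𝒟, ¬ I ⊆ K)
    (hI𝒟 : I.ssubsets ⊆ 𝒟) (hb₁ : ∀ K, DependsOn (b₁ K) (K : Set J))
    (hb₂ : ∀ K, DependsOn (b₂ K) (K : Set J)) (hb₁b : ∀ K ∈ 𝒟, (b₁ K).FactorsThrough (b K))
    (hunif : IsUniform I ({y | c y = c x}.indicator 1) b₂ β)
    (hdev : condMean (patternOn b 𝒟 I) ((deviationSet b₁ b₂ I c σ (c x)).indicator 1) x ≤ σ) :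
    HasRelativeDensity 𝒟 b I {y | c y = c x} (colorDensity b₁ I c (c x) x)
      (β / η + (σ + C * σ + σ)) x := by
  intro S hS G hG
  refine (abs_condMean_inter_sub_le _ _ _ (colorDensity b₂ I c (c x)) _ x).trans
    (add_le_add ?_ ?_)
  · have hcell : IsCylinderInter I {y | patternOn b 𝒟 S y x} :=
      isCylinderInter_setOf_pattern (fun K hK ↦ hb K (mem_filter.1 hK).1)
        (fun K hK ↦ h𝒟 K (mem_filter.1 hK).1) x
    have hle := hunif _ (hcell.inter hG)
    exact div_le_div₀ ((abs_nonneg _).trans hle) hle hη (hx.le_density S)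
  · have hker : patternOn b 𝒟 S ≤ Setoid.ker (colorDensity b₁ I c (c x)) := by
      refine le_ker_condMean ((pattern_anti fun K hK ↦ mem_filter.2 ⟨hI𝒟 hK, ?_⟩).trans
        (pattern_le_pattern fun K hK ↦ hb₁b K (hI𝒟 hK))) _
      exact (mem_ssubsets.1 hK).1.trans hS
    exact hx.condMean_abs_sub_le hC (abs_colorDensity_sub_le_one b₁ b₂ _) hσ hS hker
      (dependsOn_deviationSet hb₁ hb₂ _) hdev

theorem IsRegularization.insert {c : Finset J → (J → V) → ℕ} {B : Finset J → Set (J → V)}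
    {η' : ℝ} (hreg : IsRegularization 𝒟 b₁ b B σ η) (hI : I ∉ 𝒟) (h𝒟 : ∀ K ∈ 𝒟, ¬ I ⊆ K)
    (hI𝒟 : I.ssubsets ⊆ 𝒟) (hc : IsColoring k c) (hcb₁ : ∀ K ∈ 𝒟, (c K).FactorsThrough (b₁ K))
    (hb₁ : ∀ K, DependsOn (b₁ K) (K : Set J)) (hb₂ : ∀ K, DependsOn (b₂ K) (K : Set J))
    (hclose : ∀ a < k,
      𝔼 x, (colorDensity b₂ I (c I) a x - colorDensity b₁ I (c I) a x) ^ 2 ≤ δ)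
    (hunif : ∀ a < k, IsUniform I ({y | c I y = a}.indicator 1) b₂ β)
    (hε : 0 < ε) (hε1 : ε ≤ 1) (hσ : 0 < σ) (hσε : σ ≤ ε) (hσθ : σ ≤ θ) (hτ : 0 < τ)
    (hθτ : 4 * θ ≤ ε * τ) (hη : 0 < η) (hη' : η' ≤ η * (τ / 2))
    (hexc : k * (τ + δ / σ ^ 3) ≤ ε) (hβ : β / η + (σ + 2 ^ #𝒟 * σ + σ) ≤ θ) :
    IsRegularization (insert I 𝒟) c (Function.update b I (c I))
      (Function.update B I (exceptionalSet 𝒟 b b₁ b₂ I (c I) σ τ)) ε η' := by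
  have hne {K} (hK : K ∈ 𝒟) : K ≠ I := ne_of_mem_of_not_mem hK hI
  have hbI := hreg.dependsOn_color
  refine ⟨(forall_mem_insert ..).2 ⟨?_, fun K hK ↦ ?_⟩,
    (forall_mem_insert ..).2 ⟨?_, fun K hK ↦ ?_⟩, (forall_mem_insert ..).2 ⟨?_, fun K hK ↦ ?_⟩,
    (forall_mem_insert ..).2 ⟨?_, fun K hK ↦ ?_⟩, fun x hx ↦ ?_⟩
  · simpa using hc.dependsOn I
  · simpa [hne hK] using hbI K hK
  · simpa using dependsOn_exceptionalSet (hc.dependsOn I) hbI hb₁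
  · simpa [hne hK] using hreg.dependsOn_exceptional K hK
  · rw [Function.update_self]
    exact fun _ _ h ↦ h
  · rw [Function.update_of_ne (hne hK)]
    exact fun _ _ h ↦ hcb₁ K hK (hreg.factorsThrough K hK h)
  · simpa using (expect_exceptionalSet_le (hc.lt I) hσ hτ.le hclose).trans hexc
  · simpa [hne hK] using (hreg.expect_exceptional_le K hK).trans hσε
  have hx𝒟 : IsTypical 𝒟 b (2 ^ #𝒟) σ η x := hreg.isTypical x fun K hK ↦ by
    simpa [hne hK] using hx K (mem_insert_of_mem hK)
  obtain ⟨hsparse, hdev⟩ : τ ≤ colorDensity b₁ I (c I) (c I x) x ∧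
      condMean (patternOn b 𝒟 I) ((deviationSet b₁ b₂ I (c I) σ (c I x)).indicator 1) x ≤ σ := by
    simpa [exceptionalSet] using hx I (mem_insert_self ..)
  have hrel := hx𝒟.hasRelativeDensity (by positivity) hη hσ.le hbI h𝒟 hI𝒟 hb₁ hb₂
    hreg.factorsThrough (hunif _ (hc.lt I x)) hdev
  rw [card_insert_of_notMem hI, pow_succ']
  refine hx𝒟.insert hI (hc.dependsOn I) (fun S hS G hG ↦ (hrel S hS G hG).trans hβ)
    (hτ.trans_le hsparse) (condMean_indicator_le_one ..) (by positivity) hε.le hε1 hσθ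
    (hθτ.trans ?_) hη.le (hη'.trans ?_)
  · gcongr
  · gcongr

end Insert

theorem isRegularization_empty {V : Type*} [Fintype V] (c : Finset J → (J → V) → ℕ)
    (B : Finset J → Set (J → V)) {ε : ℝ} (hε : 0 ≤ ε) : IsRegularization ∅ c c B ε 1 := by
  refine ⟨by simp, by simp, by simp, by simp, fun x _ ↦ ⟨fun S ↦ ?_, fun {T S} _ H _ ↦ ?_⟩⟩
  · have hcell : {y | patternOn c ∅ S y x} = Set.univ :=
      Set.eq_univ_of_forall fun y K hK ↦ absurd (mem_filter.1 hK).1 (notMem_empty K)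
    have : Nonempty (J → V) := ⟨x⟩
    simp [density, hcell]
  · simp [patternOn, hε]

/-- Every colouring with `k` colours has a regularisation whose error `ε` is prescribed and whose
cell density `η` depends on `k` and `ε` only. -/
def HasRegularizations (𝒟 : Finset (Finset J)) : Prop :=
  ∀ (k : ℕ) ⦃ε : ℝ⦄, 0 < ε → ε ≤ 1 → ∃ η > 0, ∀ {V : Type u} [Fintype V]
    {c : Finset J → (J → V) → ℕ}, IsColoring k c → ∃ b B, IsRegularization 𝒟 c b B ε η

theorem exists_regularization_parameters (k : ℕ) {C ε : ℝ} (hC : 0 ≤ C) (hε : 0 < ε)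
    (hε1 : ε ≤ 1) :
    ∃ δ > 0, ∃ σ > 0, ∃ τ > 0, ∃ θ > 0, σ ≤ θ ∧ θ ≤ ε ∧ 4 * θ ≤ ε * τ ∧
      k * (τ + δ / σ ^ 3) ≤ ε ∧ (2 + C) * σ ≤ θ / 2 := by
  set τ : ℝ := ε / (2 * (k + 1)) with hτ
  set θ : ℝ := ε * τ / 4 with hθ
  have hτ0 : 0 < τ := by positivity
  have hθ0 : 0 < θ := by positivity
  have hτ1 : τ ≤ 1 := (div_le_one₀ (by positivity)).2 (by linarith [Nat.cast_nonneg (α := ℝ) k])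
  have hθε : θ ≤ ε := by linarith [mul_le_of_le_one_right hε.le hτ1]
  set σ : ℝ := θ / (2 * (2 + C)) with hσ
  have hσ0 : 0 < σ := by positivity
  refine ⟨ε * σ ^ 3 / (2 * (k + 1)), by positivity, σ, hσ0, τ, hτ0, θ, hθ0,
    div_le_self hθ0.le (by linarith), hθε, by linarith, ?_, ?_⟩
  · calc k * (τ + ε * σ ^ 3 / (2 * (k + 1)) / σ ^ 3) = k / (k + 1) * ε := by
          have := hσ0.ne'
          rw [hτ]
          field_simp
          ring
      _ ≤ ε := mul_le_of_le_one_left hε.le <| (div_le_one₀ (by positivity)).2 (by linarith)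
  · refine le_of_eq ?_
    rw [hσ]
    field_simp

theorem HasRegularizations.insert {I : Finset J} {𝒟 : Finset (Finset J)}
    (h : HasRegularizations.{u} 𝒟) (hI : I ∉ 𝒟) (h𝒟 : ∀ K ∈ 𝒟, ¬ I ⊆ K) (hI𝒟 : I.ssubsets ⊆ 𝒟) :
    HasRegularizations.{u} (insert I 𝒟) := by
  intro k ε hε hε1
  obtain ⟨δ, hδ, σ, hσ, τ, hτ, θ, hθ, hσθ, hθε, hθτ, hexc, hσC⟩ :=
    exists_regularization_parameters k (C := 2 ^ #𝒟) (by positivity) hε hε1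
  choose η hη hreg using fun m ↦ h m hσ (hσθ.trans (hθε.trans hε1))
  obtain ⟨t, ht⟩ := exists_nat_gt (k / δ)
  obtain ⟨M, hM⟩ := exists_strong_regularization (range k) I δ (β := fun m ↦ θ / 2 * η m)
    (fun m ↦ mul_pos (by positivity) (hη m)) t k
  obtain ⟨m₀, -, hmin⟩ := exists_min_image (range (M + 1)) η ⟨0, by simp⟩
  refine ⟨η m₀ * (τ / 2), mul_pos (hη m₀) (by positivity), fun {V _ c} hc ↦ ?_⟩
  obtain ⟨m, hm, b₁, b₂, hb₁, hb₂, hcb₁, hstrong⟩ :=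
    hM (φ := fun a ↦ {y | c I y = a}.indicator 1) hc
      (fun a _ ↦ dependsOn_indicator_color (hc.dependsOn I) a)
      (fun a _ ↦ abs_indicator_one_le _) <| by
        rw [card_range]
        exact (sub_neg.2 ((div_lt_iff₀ hδ).1 ht)).trans_le totalEnergy_nonneg
  obtain ⟨b, B, hregB⟩ := hreg m hb₁
  refine ⟨_, _, hregB.insert hI h𝒟 hI𝒟 hc (fun K _ ↦ hcb₁ K) hb₁.dependsOn hb₂
    (fun a ha ↦ (hstrong a (mem_range.2 ha)).1) (fun a ha ↦ (hstrong a (mem_range.2 ha)).2)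
    hε hε1 hσ (hσθ.trans hθε) hσθ hτ hθτ (hη m)
    (mul_le_mul_of_nonneg_right (hmin m (mem_range_succ_iff.2 hm)) (by positivity)) hexc ?_⟩
  rw [mul_div_cancel_right₀ _ (hη m).ne']
  linarith

theorem hasRegularizations_of_isLowerSet {𝒟 : Finset (Finset J)}
    (h𝒟 : IsLowerSet (𝒟 : Set (Finset J))) : HasRegularizations.{u} 𝒟 := by
  revert h𝒟
  refine Finset.induction_on_max_value card 𝒟 (fun _ k ε hε _ ↦ ?_)
    fun I 𝒟 hI hmax ih h𝒟 ↦ ?_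
  · exact ⟨1, one_pos, fun {V _ c} _ ↦ ⟨c, fun _ ↦ ∅, isRegularization_empty c _ hε.le⟩⟩
  · have hnot : ∀ K ∈ 𝒟, ¬ I ⊆ K := fun K hK hIK ↦
      hI (eq_of_subset_of_card_le hIK (hmax K hK) ▸ hK)
    refine (ih fun K L hLK hK ↦ ?_).insert hI hnot fun L hL ↦ ?_
    · refine mem_of_mem_insert_of_ne (h𝒟 hLK (mem_insert_of_mem hK)) ?_
      rintro rfl
      exact hnot K hK hLK
    · rw [mem_ssubsets] at hL
      exact mem_of_mem_insert_of_ne (h𝒟 hL.1 (mem_insert_self ..)) hL.ne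

end Regularization

section Copies

variable {α V : Type*} [Fintype α] [Fintype V]

theorem card_filter_eqOn [DecidableEq α] [DecidableEq V] (x : α → V) (e : Finset α) :
    #{y : α → V | ∀ i ∈ e, y i = x i} = Fintype.card V ^ #eᶜ := by
  have hpi : ({y | ∀ i ∈ e, y i = x i} : Finset (α → V)) =
      Fintype.piFinset fun i ↦ if i ∈ e then {x i} else univ := by
    ext y
    simp only [mem_filter_univ, Fintype.mem_piFinset]
    refine forall_congr' fun i ↦ ?_
    by_cases hi : i ∈ e <;> simp [hi]
  simp [hpi, Fintype.card_piFinset, apply_ite card, prod_ite, filter_notMem_eq_sdiff,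
    compl_eq_univ_sdiff]

theorem expect_indicator_one_mul_card {X : Type*} [Fintype X] (A : Set X) :
    (𝔼 x, A.indicator (1 : X → ℝ) x) * Fintype.card X = A.ncard := by
  classical
  rw [mul_comm, Fintype.card_mul_expect, Set.ncard_eq_toFinset_card']
  simp only [Set.indicator_apply, Pi.one_apply, sum_boole, Set.filter_mem_univ_eq_toFinset]

theorem ncard_image_le_expect_indicator_mul [DecidableEq α] {β : Type*} {e : Finset α}
    {B : Set (α → V)} (hB : DependsOn (· ∈ B) (e : Set α)) {g : (α → V) → β}
    (hg : DependsOn g (e : Set α)) :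
    ((g '' B).ncard : ℝ) ≤ (𝔼 x, B.indicator 1 x) * Fintype.card V ^ #e := by
  classical
  obtain rfl | ⟨x₀, -⟩ := B.eq_empty_or_nonempty
  · simp
  have hfiber : Fintype.card V ^ #eᶜ * (g '' B).ncard ≤ B.ncard := by
    rw [Set.ncard_eq_toFinset_card', Set.ncard_eq_toFinset_card', Set.toFinset_image]
    refine mul_card_image_le_card _ _ fun _ hb ↦ ?_
    obtain ⟨x, hx, rfl⟩ := mem_image.1 hb
    rw [← card_filter_eqOn x e]
    refine card_le_card fun y hy ↦ ?_
    have hyx : ∀ i ∈ (e : Set α), y i = x i := (mem_filter.1 hy).2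
    rw [mem_filter, Set.mem_toFinset, hg hyx]
    exact ⟨(hB hyx).mpr (Set.mem_toFinset.1 hx), rfl⟩
  have hpos : (0 : ℝ) < Fintype.card V ^ #eᶜ := by
    exact_mod_cast (card_filter_eqOn x₀ e).symm ▸ card_pos.2 ⟨x₀, by simp⟩
  refine le_of_mul_le_mul_left ?_ hpos
  calc (Fintype.card V : ℝ) ^ #eᶜ * (g '' B).ncard ≤ B.ncard := by exact_mod_cast hfiber
    _ = (𝔼 x, B.indicator 1 x) * Fintype.card (α → V) := (expect_indicator_one_mul_card B).symm
    _ = (Fintype.card V : ℝ) ^ #eᶜ * ((𝔼 x, B.indicator 1 x) * Fintype.card V ^ #e) := by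
      rw [Fintype.card_fun, ← card_add_card_compl e]
      push_cast
      ring

theorem ncard_setOf_injective :
    {f : α → V | Function.Injective f}.ncard =
      (Fintype.card V).descFactorial (Fintype.card α) := by
  classical
  rw [← Fintype.card_embedding_eq, ← Nat.card_eq_fintype_card, ← Nat.card_coe_set_eq]
  exact Nat.card_congr (Equiv.subtypeInjectiveEquivEmbedding α V)

theorem density_mul_pow_le [DecidableEq α] {s : Setoid (α → V)} {x : α → V}
    {P : (α → V) → Prop} (hP : ∀ y, s y x → P y) :
    density s x * Fintype.card V ^ Fintype.card α ≤
      Nat.card {f : α → V // Function.Injective f ∧ P f} +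
        (Fintype.card V ^ Fintype.card α - (Fintype.card V).descFactorial (Fintype.card α)) := by
  have hcover : {y | s y x} ⊆
      {f | Function.Injective f ∧ P f} ∪ {f : α → V | Function.Injective f}ᶜ := fun y hy ↦ by
    by_cases hinj : Function.Injective y
    · exact Or.inl ⟨hinj, hP y hy⟩
    · exact Or.inr hinj
  have hcompl := Set.ncard_add_ncard_compl {f : α → V | Function.Injective f}
  have hcell := (Set.ncard_le_ncard hcover).trans (Set.ncard_union_le ..)
  rw [Nat.card_eq_fintype_card, Fintype.card_fun, ncard_setOf_injective] at hcompl
  rw [density, ← Nat.cast_pow, ← Fintype.card_fun, expect_indicator_one_mul_card,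
    Fintype.card_fun, ← hcompl]
  push_cast
  rw [add_sub_cancel_left]
  exact_mod_cast hcell

end Copies

theorem eventually_pow_le_choose (r : ℕ) :
    ∀ᶠ n : ℕ in Filter.atTop, (n : ℝ) ^ r ≤ 2 * r.factorial * n.choose r := by
  filter_upwards [(isEquivalent_choose r).isLittleO.def one_half_pos] with n hn
  have hr : (0 : ℝ) < r.factorial := by positivity
  have hnonneg : (0 : ℝ) ≤ n ^ r / r.factorial := by positivity
  simp only [Pi.sub_apply, Real.norm_eq_abs, abs_of_nonneg hnonneg] at hn
  have hle : (n : ℝ) ^ r / r.factorial ≤ 2 * n.choose r := by linarith [(abs_le.1 hn).1]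
  calc (n : ℝ) ^ r ≤ 2 * n.choose r * r.factorial := (div_le_iff₀ hr).1 hle
    _ = 2 * r.factorial * n.choose r := by ring

theorem eventually_pow_sub_descFactorial_le (k : ℕ) {δ : ℝ} (hδ : 0 < δ) :
    ∀ᶠ n : ℕ in Filter.atTop, (n : ℝ) ^ k - n.descFactorial k ≤ δ * n ^ k := by
  filter_upwards [(isEquivalent_descFactorial k).isLittleO.def hδ] with n hn
  have hnonneg : (0 : ℝ) ≤ n ^ k := by positivity
  simp only [Pi.sub_apply, Real.norm_eq_abs, abs_of_nonneg hnonneg] at hn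
  linarith [(abs_le.1 hn).1]

theorem eventually_forall_pow_le_choose (m : ℕ) :
    ∀ᶠ n : ℕ in Filter.atTop, ∀ r ≤ m, (n : ℝ) ^ r ≤ 2 * m.factorial * n.choose r := by
  have hall := (Filter.eventually_all_finset (range (m + 1))).2
    fun r _ ↦ eventually_pow_le_choose r
  filter_upwards [hall] with n hn r hr
  refine (hn r (mem_range_succ_iff.2 hr)).trans ?_
  gcongr

theorem card_biUnion_le_mul_of_le {ι β : Type*} [DecidableEq β] {s : Finset ι} {t : ι → Finset β}
    {C : ℝ} (h : ∀ i ∈ s, (#(t i) : ℝ) ≤ C) : (#(s.biUnion t) : ℝ) ≤ #s * C := by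
  calc (#(s.biUnion t) : ℝ) ≤ ∑ i ∈ s, (#(t i) : ℝ) := by exact_mod_cast card_biUnion_le
    _ ≤ #s * C := by simpa using sum_le_card_nsmul s _ C h

section Removal

variable {α V : Type*}

theorem isLowerSet_biUnion_powerset [DecidableEq α] (F : Finset (Finset α)) :
    IsLowerSet (F.biUnion powerset : Set (Finset α)) := fun K L hLK hK ↦ by
  simp only [coe_biUnion, Set.mem_iUnion, mem_coe, mem_powerset] at hK ⊢
  obtain ⟨e, he, hKe⟩ := hK
  exact ⟨e, he, hLK.trans hKe⟩

variable [DecidableEq V]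

/-- The colouring that records which sets of coordinates are mapped onto an edge of `G`. -/
def edgeColoring (G : Finset (Finset V)) (I : Finset α) (x : α → V) : ℕ :=
  if I.image x ∈ G then 1 else 0

theorem dependsOn_image (e : Finset α) : DependsOn (fun x : α → V ↦ e.image x) (e : Set α) :=
  fun _ _ hxy ↦ image_congr hxy

theorem isColoring_edgeColoring (G : Finset (Finset V)) :
    IsColoring 2 (edgeColoring G : Finset α → (α → V) → ℕ) where
  dependsOn I x y hxy := by simp only [edgeColoring, dependsOn_image I hxy]
  lt I x := by
    unfold edgeColoring
    split_ifs <;> simp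

variable [Fintype V] {F : Finset (Finset α)} {G : Finset (Finset V)}
  {b : Finset α → (α → V) → ℕ} {B : Finset α → Set (α → V)} {ε η : ℝ}

open Classical in
/-- The edges to be removed: the images of the edges `e` of `F` under the maps that are injective
on `e` and belong to the exceptional set of some subset of `e`. -/
noncomputable def exceptionalEdges (F : Finset (Finset α)) (B : Finset α → Set (α → V)) :
    Finset (Finset V) :=
  {E | ∃ e ∈ F, ∃ I ⊆ e, #E = #e ∧ E ∈ (e.image ·) '' B I}

theorem mem_exceptionalEdges {E : Finset V} :
    E ∈ exceptionalEdges F B ↔ ∃ e ∈ F, ∃ I ⊆ e, #E = #e ∧ E ∈ (e.image ·) '' B I := by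
  classical
  exact mem_filter_univ _

variable [DecidableEq α]

theorem notMem_of_forall_image_notMem_exceptionalEdges {x : α → V} (hinj : Function.Injective x)
    (hx : ∀ e ∈ F, e.image x ∉ exceptionalEdges F B) : ∀ K ∈ F.biUnion powerset, x ∉ B K := by
  intro K hK hxK
  obtain ⟨e, he, hKe⟩ := mem_biUnion.1 hK
  exact hx e he <| mem_exceptionalEdges.2
    ⟨e, he, K, mem_powerset.1 hKe, card_image_of_injective e hinj, x, hxK, rfl⟩

variable [Fintype α]

theorem IsRegularization.card_filter_exceptionalEdges_le {c : Finset α → (α → V) → ℕ}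
    (hreg : IsRegularization (F.biUnion powerset) c b B ε η) (hε : 0 ≤ ε) {k : ℝ} (hk : 0 ≤ k)
    {r : ℕ} (hr : r ≤ Fintype.card α → (Fintype.card V : ℝ) ^ r ≤ k) :
    (#{E ∈ exceptionalEdges F B | #E = r} : ℝ) ≤ #F * (2 ^ Fintype.card α * (ε * k)) := by
  classical
  have himage {e I} (he : e ∈ F) (hIe : I ⊆ e) (her : #e = r) :
      (((e.image ·) '' B I).ncard : ℝ) ≤ ε * k := by
    have hI : I ∈ F.biUnion powerset := mem_biUnion.2 ⟨e, he, mem_powerset.2 hIe⟩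
    refine (ncard_image_le_expect_indicator_mul
      ((hreg.dependsOn_exceptional I hI).mono (coe_subset.2 hIe)) (dependsOn_image e)).trans ?_
    rw [her]
    exact mul_le_mul (hreg.expect_exceptional_le I hI) (hr (her ▸ card_le_univ e))
      (by positivity) hε
  have hcover : {E ∈ exceptionalEdges F B | #E = r} ⊆
      {e ∈ F | #e = r}.biUnion fun e ↦ e.powerset.biUnion fun I ↦
        ((e.image ·) '' B I).toFinset := fun E hE ↦ by
    obtain ⟨hE, hEr⟩ := mem_filter.1 hE
    obtain ⟨e, he, I, hIe, hEe, hEI⟩ := mem_exceptionalEdges.1 hE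
    simp only [mem_biUnion, mem_filter, mem_powerset, Set.mem_toFinset]
    exact ⟨e, ⟨he, hEe.symm.trans hEr⟩, I, hIe, hEI⟩
  calc (#{E ∈ exceptionalEdges F B | #E = r} : ℝ) ≤ _ := Nat.cast_le.2 (card_le_card hcover)
    _ ≤ #{e ∈ F | #e = r} * (2 ^ Fintype.card α * (ε * k)) := by
      refine card_biUnion_le_mul_of_le fun e he ↦ ?_
      obtain ⟨he, her⟩ := mem_filter.1 he
      refine (card_biUnion_le_mul_of_le fun I hI ↦ ?_).trans
        (mul_le_mul_of_nonneg_right ?_ (mul_nonneg hε hk))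
      · rw [← Set.ncard_eq_toFinset_card']
        exact himage he (mem_powerset.1 hI) her
      · rw [card_powerset]
        exact_mod_cast Nat.pow_le_pow_right two_pos (card_le_univ e)
    _ ≤ #F * (2 ^ Fintype.card α * (ε * k)) := by
      gcongr
      exact filter_subset _ _

theorem IsRegularization.mul_pow_le_natCard_add
    (hreg : IsRegularization (F.biUnion powerset) (edgeColoring G) b B ε η) {x : α → V}
    (hxB : ∀ K ∈ F.biUnion powerset, x ∉ B K) (hx : ∀ e ∈ F, e.image x ∈ G) :
    η * Fintype.card V ^ Fintype.card α ≤
      Nat.card {f : α → V // Function.Injective f ∧ ∀ e ∈ F, e.image f ∈ G} +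
        (Fintype.card V ^ Fintype.card α - (Fintype.card V).descFactorial (Fintype.card α)) := by
  have hcell : η ≤ density (patternOn b (F.biUnion powerset) univ) x :=
    (hreg.isTypical x hxB).le_density univ
  refine (mul_le_mul_of_nonneg_right hcell (by positivity)).trans <|
    density_mul_pow_le (P := fun f ↦ ∀ e ∈ F, e.image f ∈ G) fun y hy e he ↦ ?_
  have he𝒟 : e ∈ F.biUnion powerset := mem_biUnion.2 ⟨e, he, mem_powerset_self e⟩
  have hcol := hreg.factorsThrough e he𝒟 (hy e (mem_filter.2 ⟨he𝒟, subset_univ e⟩))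
  by_contra hy
  simp [edgeColoring, hx e he, hy] at hcol

theorem IsRegularization.not_containsCopy_sdiff
    (hreg : IsRegularization (F.biUnion powerset) (edgeColoring G) b B ε η)
    (hfew : Nat.card {f : α → V // Function.Injective f ∧ ∀ e ∈ F, e.image f ∈ G} +
        ((Fintype.card V : ℝ) ^ Fintype.card α -
          (Fintype.card V).descFactorial (Fintype.card α)) <
      η * Fintype.card V ^ Fintype.card α) :
    ¬ ContainsCopy F (G \ exceptionalEdges F B) := by
  rintro ⟨x, hinj, hx⟩
  simp only [mem_sdiff] at hx
  have hxB := notMem_of_forall_image_notMem_exceptionalEdges hinj fun e he ↦ (hx e he).2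
  exact hfew.not_ge (hreg.mul_pow_le_natCard_add hxB fun e he ↦ (hx e he).1)

end Removal

end HypergraphRemoval

open HypergraphRemoval in
theorem hypergraph_removal_general.{u} {α : Type*} [Fintype α] (F : Finset (Finset α)) (ε : ℝ)
    (hε : 0 < ε) :
    ∃ η : ℝ, 0 < η ∧ ∃ n₀ : ℕ, 0 < n₀ ∧ ∀ (V : Type u) [Fintype V] [DecidableEq V],
      n₀ < Fintype.card V → ∀ G : Finset (Finset V),
        (Nat.card {f : α → V // Function.Injective f ∧ ∀ e ∈ F, e.image f ∈ G} : ℝ)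
            ≤ η * (Fintype.card V : ℝ) ^ Fintype.card α →
        ∃ G' ⊆ G, (∀ r, (#{e ∈ G \ G' | #e = r} : ℝ) ≤ ε * (Fintype.card V).choose r) ∧
          ¬ ContainsCopy F G' := by
  classical
  set a := Fintype.card α
  obtain ⟨δ, hδ, hδε⟩ := exists_pos_mul_lt hε (#F * (2 ^ a * (2 * a.factorial)))
  obtain ⟨η, hη, hreg⟩ := hasRegularizations_of_isLowerSet.{u}
    (isLowerSet_biUnion_powerset F) 2 (lt_min one_pos hδ) (min_le_left ..)
  obtain ⟨n₀, hn₀⟩ := Filter.eventually_atTop.1 <| (eventually_forall_pow_le_choose a).and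
    (eventually_pow_sub_descFactorial_le a (δ := η / 3) (by positivity))
  refine ⟨η / 3, by positivity, n₀ + 1, n₀.succ_pos, fun V _ _ hV G hG ↦ ?_⟩
  obtain ⟨hchoose, hdesc⟩ := hn₀ (Fintype.card V) (by omega)
  obtain ⟨b, B, hB⟩ := hreg (isColoring_edgeColoring G)
  refine ⟨G \ exceptionalEdges F B, sdiff_subset, fun r ↦ ?_, hB.not_containsCopy_sdiff ?_⟩
  · calc (#{e ∈ G \ (G \ exceptionalEdges F B) | #e = r} : ℝ)
        ≤ #{e ∈ exceptionalEdges F B | #e = r} := by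
          gcongr
          exact sdiff_sdiff_right_self.trans_le inf_le_right
      _ ≤ #F * (2 ^ a * (min 1 δ * (2 * a.factorial * (Fintype.card V).choose r))) :=
        hB.card_filter_exceptionalEdges_le (by positivity) (by positivity) (hchoose r)
      _ ≤ #F * (2 ^ a * (δ * (2 * a.factorial * (Fintype.card V).choose r))) := by
        gcongr
        exact min_le_right ..
      _ = #F * (2 ^ a * (2 * a.factorial)) * δ * (Fintype.card V).choose r := by ring
      _ ≤ ε * (Fintype.card V).choose r := by gcongr
  · have hV0 : 0 < Fintype.card V := by omega
    have hpos : 0 < η * (Fintype.card V : ℝ) ^ a := by positivity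
    linarith

/-- **Lemma (hypergraph removal lemma).**  Fix an `r`-graph `F`.  For every `ε > 0` there
exist `η > 0` and `n₀ > 0` such that every `n`-vertex `r`-graph `G` with `n > n₀` containing
at most `η·n^(|V(F)|)` (labelled) copies of `F` can be made `F`-free by deleting at most
`ε·C(n,r)` edges. -/
theorem hypergraph_removal {α : Type*} [Fintype α]
    (r : ℕ) (F : Finset (Finset α)) (hF : IsRGraph r F)
    (ε : ℝ) (hε : 0 < ε) :
    ∃ η : ℝ, 0 < η ∧ ∃ n₀ : ℕ, 0 < n₀ ∧ ∀ n : ℕ, n₀ < n →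
      ∀ G : Finset (Finset (Fin n)), IsRGraph r G →
        (Nat.card {f : α → Fin n // Function.Injective f ∧ ∀ e ∈ F, e.image f ∈ G} : ℝ)
            ≤ η * (n : ℝ) ^ (Fintype.card α) →
        ∃ G' ⊆ G, ((G \ G').card : ℝ) ≤ ε * (n.choose r) ∧ ¬ ContainsCopy F G' := by
  obtain ⟨η, hη, n₀, hn₀, hremoval⟩ := hypergraph_removal_general F ε hε
  refine ⟨η, hη, n₀, hn₀, fun n hn G hG hcopies ↦ ?_⟩
  obtain ⟨G', hG', hcard, hfree⟩ := hremoval (Fin n) (by simpa using hn) G (by simpa using hcopies)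
  refine ⟨G', hG', ?_, hfree⟩
  have huniform : {e ∈ G \ G' | #e = r} = G \ G' :=
    filter_true_of_mem fun e he ↦ hG e (mem_sdiff.1 he).1
  simpa [huniform] using hcard r
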